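/- Let m ≥ 5 and n be positive integers. If there is an injective group homomorphism from G(C_m) into G(P_n), then m − 1 ≤ n. -/

import Mathlib

open SimpleGraph

/-- The set of commutator relations of a graph: one commutator for each edge. -/
def raagRels {V : Type} (G : SimpleGraph V) : Set (FreeGroup V) :=
  {r | ∃ u v : V, G.Adj u v ∧
    r = FreeGroup.of u * FreeGroup.of v * (FreeGroup.of u)⁻¹ * (FreeGroup.of v)⁻¹}

/-- The right-angled Artin group `A(G)` of a graph `G`. -/
abbrev RAAG {V : Type} (G : SimpleGraph V) : Type := PresentedGroup (raagRels G)

/-- `G(Γ) = A(Γᶜ)`, the RAAG on the complement graph. -/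
abbrev GG {V : Type} (G : SimpleGraph V) : Type := RAAG Gᶜ

/-- A linear forest: an acyclic graph all of whose vertices have degree at most 2. -/
def IsLinearForest {V : Type} (G : SimpleGraph V) : Prop :=
  G.IsAcyclic ∧ ∀ v : V, (G.neighborSet v).ncard ≤ 2

/-- The star of a vertex: the vertex together with its neighbours. -/
def starSet {V : Type} (G : SimpleGraph V) (v : V) : Set V :=
  insert v (G.neighborSet v)

/-- The double `D_v(G)` of `G` along the star of `v`: original vertices together with
copies of the vertices outside the star. -/
def GraphDouble {V : Type} (G : SimpleGraph V) (v : V) :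
    SimpleGraph (V ⊕ {w : V // w ∉ starSet G v}) :=
  SimpleGraph.fromRel (fun x y =>
    match x, y with
    | Sum.inl a, Sum.inl b => G.Adj a b
    | Sum.inr a, Sum.inr b => G.Adj a.1 b.1
    | Sum.inl a, Sum.inr b => a ∈ starSet G v ∧ G.Adj a b.1
    | Sum.inr _, Sum.inl _ => False)

/-- Subdivision of the edge `[v,w]` of `Λ`, with `none` as the new vertex. -/
def SubdivEdge {V : Type} (Λ : SimpleGraph V) (v w : V) : SimpleGraph (Option V) :=
  SimpleGraph.fromRel (fun x y =>
    match x, y with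
    | some a, some b => Λ.Adj a b ∧ ¬((a = v ∧ b = w) ∨ (a = w ∧ b = v))
    | some a, none => a = v ∨ a = w
    | none, some _ => False
    | none, none => False)

/-- The graph `Λ_u⁻(w₁,w₂)`, with `none` as the new vertex `v`. -/
def MinusGraph {V : Type} (Λ : SimpleGraph V) (u w₁ w₂ : V) : SimpleGraph (Option V) :=
  SimpleGraph.fromRel (fun x y =>
    match x, y with
    | some a, some b => Λ.Adj a b ∧
        ¬((a = u ∧ b = w₁) ∨ (a = w₁ ∧ b = u) ∨ (a = u ∧ b = w₂) ∨ (a = w₂ ∧ b = u))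
    | some a, none => a = w₁ ∨ a = u ∨ a = w₂
    | none, some _ => False
    | none, none => False)

/-- The graph `Λ_u⁺(w₁,w₂)`: `Λ_u⁻(w₁,w₂)` with the edge `[u,w₂]` added back. -/
def PlusGraph {V : Type} (Λ : SimpleGraph V) (u w₁ w₂ : V) : SimpleGraph (Option V) :=
  SimpleGraph.fromRel (fun x y =>
    (MinusGraph Λ u w₁ w₂).Adj x y ∨ (x = some u ∧ y = some w₂))

/-!
Deleting a vertex `v` embeds the right-angled Artin group `A(Γ)` into the semidirect product of
`A(Γ - v)` with the free group on the cosets of the subgroup generated by the neighbours of `v`: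
this is the HNN extension with stable letter `v`. By induction on the number of vertices, abelian
subgroups of `A(Γ)` have rank at most the clique number of `Γ`. Likewise, if `Γᶜ` is a forest and
`Γ` contains no `k`-clique joined to two non-adjacent vertices, then any two elements of `A(Γ)`
centralizing an abelian subgroup of rank `k` have commuting powers; here one deletes the neighbour
of a leaf of `Γᶜ`, which makes the leaf generate a central direct factor.

If `m = 2d`, then `G(C_m)` contains `ℤ^d`, so `P_n` has `d` independent vertices and `2d ≤ n + 1`.
If `m = 2d + 3`, then `G(C_m)` contains `F₂ × ℤ^d`, so `P_n` contains an edge and `d` independent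
vertices not adjacent to it, and `2d + 2 ≤ n`.
-/

/-! ### Commuting elements of free groups -/

section FreeGroups

variable {X : Type*}

theorem eq_of_commute_freeGroup_of {a b : X}
    (h : Commute (FreeGroup.of a) (FreeGroup.of b)) : a = b := by
  classical
  by_contra hab
  have swaps_commute := h.map (FreeGroup.lift fun x =>
    if x = a then Equiv.swap (0 : Fin 3) 1 else Equiv.swap 1 2)
  simp only [FreeGroup.lift_apply_of, if_true, if_neg (Ne.symm hab)] at swaps_commute
  exact absurd swaps_commute.eq (by decide)

theorem isCyclic_of_isFreeGroup_of_isMulCommutative (G : Type*) [Group G] [IsFreeGroup G]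
    [IsMulCommutative G] : IsCyclic G := by
  let e : FreeGroup (IsFreeGroup.Generators G) ≃* G := IsFreeGroup.mulEquiv G
  have : Subsingleton (IsFreeGroup.Generators G) :=
    ⟨fun a b => eq_of_commute_freeGroup_of (e.injective (by
      rw [map_mul, map_mul]; exact mul_comm' _ _))⟩
  have : IsCyclic (FreeGroup (IsFreeGroup.Generators G)) := by
    cases isEmpty_or_nonempty (IsFreeGroup.Generators G) with
    | inl _ => infer_instance
    | inr h =>
      have := uniqueOfSubsingleton h.some
      infer_instance
  exact isCyclic_of_surjective e e.surjective

theorem exists_zpow_eq_zpow_of_commute {f g : FreeGroup X} (hf : f ≠ 1) (h : Commute f g) :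
    ∃ p q : ℤ, p ≠ 0 ∧ g ^ p = f ^ q := by
  have : IsMulCommutative (Subgroup.closure {f, g}) :=
    Subgroup.isMulCommutative_closure (by
      rintro x (rfl | rfl) y (rfl | rfl)
      exacts [rfl, h, h.symm, rfl])
  have := isCyclic_of_isFreeGroup_of_isMulCommutative (Subgroup.closure {f, g})
  obtain ⟨z, hz⟩ := IsCyclic.exists_generator (α := Subgroup.closure {f, g})
  obtain ⟨i, hi⟩ := hz ⟨f, Subgroup.subset_closure (by simp)⟩
  obtain ⟨j, hj⟩ := hz ⟨g, Subgroup.subset_closure (by simp)⟩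
  replace hi : (z : FreeGroup X) ^ i = f := congrArg Subtype.val hi
  replace hj : (z : FreeGroup X) ^ j = g := congrArg Subtype.val hj
  refine ⟨i, j, ?_, by simpa only [hi, hj] using zpow_comm (z : FreeGroup X) j i⟩
  rintro rfl
  exact hf (hi ▸ zpow_zero _)

theorem commute_of_commute_zpow {G : Type*} [Group G] [IsMulTorsionFree G] {a b : G} {p : ℤ}
    (hp : p ≠ 0) (h : Commute (a ^ p) b) : Commute a b := by
  have : b * a * b⁻¹ = a := zpow_left_injective hp (by
    simp only [conj_zpow, ← h.eq, mul_inv_cancel_right])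
  exact (mul_inv_eq_iff_eq_mul.1 this).symm

theorem map_eq_of_commute_of_map_eq (φ : FreeGroup X →* FreeGroup X) {f g : FreeGroup X}
    (hf : f ≠ 1) (hφ : φ f = f) (h : Commute f g) : φ g = g := by
  obtain ⟨p, q, hp, hpq⟩ := exists_zpow_eq_zpow_of_commute hf h
  exact zpow_left_injective hp (by simp only [← map_zpow, hpq]; rw [map_zpow, hφ])

theorem commute_trans_of_ne_one {f g h : FreeGroup X} (hf : f ≠ 1) (hg : Commute f g)
    (hh : Commute f h) : Commute g h := by
  obtain ⟨p, q, hp, hpq⟩ := exists_zpow_eq_zpow_of_commute hf hg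
  exact commute_of_commute_zpow hp (hpq ▸ hh.zpow_left q)

end FreeGroups

/-! ### Free factors and minimal supports -/

section FreeFactors

variable {X : Type*}

open Classical in
/-- The retraction of the free group on `X` onto the free factor generated by `T`, killing the
other generators. An element `f` lies in that free factor iff `freeFactorRetraction T f = f`,
which is how membership is expressed below. -/
noncomputable def freeFactorRetraction (T : Set X) : FreeGroup X →* FreeGroup X :=
  FreeGroup.lift fun x => if x ∈ T then FreeGroup.of x else 1

theorem freeFactorRetraction_of_of_mem {T : Set X} {x : X} (hx : x ∈ T) :
    freeFactorRetraction T (FreeGroup.of x) = FreeGroup.of x := by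
  simp [freeFactorRetraction, hx]

theorem freeFactorRetraction_of_of_notMem {T : Set X} {x : X} (hx : x ∉ T) :
    freeFactorRetraction T (FreeGroup.of x) = 1 := by
  simp [freeFactorRetraction, hx]

theorem freeFactorRetraction_empty : freeFactorRetraction (∅ : Set X) = 1 :=
  FreeGroup.ext_hom _ _ fun _ => freeFactorRetraction_of_of_notMem (Set.notMem_empty _)

theorem freeFactorRetraction_freeFactorRetraction (S T : Set X) (f : FreeGroup X) :
    freeFactorRetraction S (freeFactorRetraction T f) = freeFactorRetraction (S ∩ T) f := by
  suffices (freeFactorRetraction S).comp (freeFactorRetraction T) = freeFactorRetraction (S ∩ T)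
    from DFunLike.congr_fun this f
  ext x
  by_cases hS : x ∈ S <;> by_cases hT : x ∈ T <;> simp [freeFactorRetraction, hS, hT]

theorem freeFactorRetraction_eq_self_mono {S T : Set X} (hST : S ⊆ T) {f : FreeGroup X}
    (hf : freeFactorRetraction S f = f) : freeFactorRetraction T f = f := by
  rw [← hf, freeFactorRetraction_freeFactorRetraction, Set.inter_eq_right.2 hST]

theorem exists_finset_freeFactorRetraction_eq_self (f : FreeGroup X) :
    ∃ T : Finset X, freeFactorRetraction T f = f := by
  classical
  induction f using FreeGroup.induction_on with
  | C1 => exact ⟨∅, map_one _⟩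
  | of x => exact ⟨{x}, freeFactorRetraction_of_of_mem (by simp)⟩
  | inv_of x hx =>
    obtain ⟨T, hT⟩ := hx
    exact ⟨T, by rw [map_inv, hT]⟩
  | mul f g hf hg =>
    obtain ⟨S, hS⟩ := hf
    obtain ⟨T, hT⟩ := hg
    refine ⟨S ∪ T, ?_⟩
    rw [map_mul, freeFactorRetraction_eq_self_mono (by simp) hS,
      freeFactorRetraction_eq_self_mono (by simp) hT]

/-- Some conjugate of `f` lies in the free factor generated by `T`. -/
def ConjugateIntoFreeFactor (f : FreeGroup X) (T : Set X) : Prop :=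
  ∃ c, freeFactorRetraction T (c * f * c⁻¹) = c * f * c⁻¹

theorem ConjugateIntoFreeFactor.inter {f : FreeGroup X} {S T : Set X}
    (hS : ConjugateIntoFreeFactor f S) (hT : ConjugateIntoFreeFactor f T) :
    ConjugateIntoFreeFactor f (S ∩ T) := by
  obtain ⟨c, hc⟩ := hS
  obtain ⟨d, hd⟩ := hT
  let r := freeFactorRetraction S (c * d⁻¹)
  have conj_eq : r⁻¹ * c * f * (r⁻¹ * c)⁻¹ = freeFactorRetraction (S ∩ T) (d * f * d⁻¹) :=
    calc r⁻¹ * c * f * (r⁻¹ * c)⁻¹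
        = r⁻¹ * freeFactorRetraction S (c * f * c⁻¹) * r := by rw [hc]; group
      _ = freeFactorRetraction S (d * f * d⁻¹) := by
        rw [← map_inv, ← map_mul, ← map_mul]; group
      _ = freeFactorRetraction (S ∩ T) (d * f * d⁻¹) := by
        rw [← freeFactorRetraction_freeFactorRetraction, hd]
  exact ⟨r⁻¹ * c, by rw [conj_eq, freeFactorRetraction_freeFactorRetraction, Set.inter_self]⟩

theorem exists_least_conjugateIntoFreeFactor (f : FreeGroup X) :
    ∃ T : Finset X, ConjugateIntoFreeFactor f T ∧
      ∀ S : Set X, ConjugateIntoFreeFactor f S → (T : Set X) ⊆ S := by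
  classical
  obtain ⟨T₀, hT₀⟩ := exists_finset_freeFactorRetraction_eq_self f
  obtain ⟨T, hT⟩ := exists_minimal_of_wellFoundedLT
    (fun T : Finset X => ConjugateIntoFreeFactor f T) ⟨T₀, 1, by simpa using hT₀⟩
  refine ⟨T, hT.prop, fun S hS x hxT => ?_⟩
  have inter_eq : ((T.filter (· ∈ S) : Finset X) : Set X) = ↑T ∩ S := by ext; simp
  have : T ⊆ T.filter (· ∈ S) :=
    hT.le_of_le (inter_eq ▸ hT.prop.inter hS) (Finset.filter_subset _ _)
  exact (Finset.mem_filter.1 (this hxT)).2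

theorem nonempty_of_conjugateIntoFreeFactor {f : FreeGroup X} {T : Set X} (hf : f ≠ 1)
    (hT : ConjugateIntoFreeFactor f T) : T.Nonempty := by
  rw [Set.nonempty_iff_ne_empty]
  rintro rfl
  obtain ⟨c, hc⟩ := hT
  rw [freeFactorRetraction_empty, MonoidHom.one_apply] at hc
  exact hf (conj_eq_one_iff.1 hc.symm)

end FreeFactors

/-! ### Free groups extended by permutations of the generators -/

section PermutationalExtension

variable {H X : Type*} [Group H] [MulAction H X]

/-- The action of `H` on the free group on `X` induced by an action of `H` on the set `X` of free
generators. -/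
def freeGroupAction (H X : Type*) [Group H] [MulAction H X] : H →* MulAut (FreeGroup X) where
  toFun h := FreeGroup.freeGroupCongr (MulAction.toPerm h)
  map_one' := by
    rw [MulAction.toPerm_one]
    exact FreeGroup.freeGroupCongr_refl
  map_mul' a b := by
    ext f
    simp only [MulAut.mul_apply, FreeGroup.freeGroupCongr_apply, FreeGroup.map.comp]
    congr 2
    ext x
    exact mul_smul a b x

@[simp]
theorem freeGroupAction_of (h : H) (x : X) :
    freeGroupAction H X h (FreeGroup.of x) = FreeGroup.of (h • x) := by
  simp [freeGroupAction]

theorem freeGroupAction_freeFactorRetraction (h : H) (T : Set X) (f : FreeGroup X) :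
    freeGroupAction H X h (freeFactorRetraction T f) =
      freeFactorRetraction ((h • ·) '' T) (freeGroupAction H X h f) := by
  suffices (freeGroupAction H X h).toMonoidHom.comp (freeFactorRetraction T) =
      (freeFactorRetraction ((h • ·) '' T)).comp (freeGroupAction H X h).toMonoidHom from
    DFunLike.congr_fun this f
  ext x
  by_cases hx : x ∈ T <;> simp [freeFactorRetraction, hx]

theorem freeGroupAction_eq_self_of_forall_smul_eq {h : H} {T : Set X} (hT : ∀ x ∈ T, h • x = x)
    {f : FreeGroup X} (hf : freeFactorRetraction T f = f) : freeGroupAction H X h f = f := by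
  suffices (freeGroupAction H X h).toMonoidHom.comp (freeFactorRetraction T) =
      freeFactorRetraction T by
    rw [← hf]
    exact DFunLike.congr_fun this f
  ext x
  by_cases hx : x ∈ T
  · simp [freeFactorRetraction_of_of_mem hx, hT x hx]
  · simp [freeFactorRetraction_of_of_notMem hx]

variable (H X) in
/-- The semidirect product of the free group on `X` with a group acting on `X`. When `X` is a coset
space `H ⧸ L` this is the HNN extension of `H` whose stable letter commutes with `L`. -/
abbrev PermutationalExtension : Type _ := FreeGroup X ⋊[freeGroupAction H X] H

namespace PermutationalExtension

open SemidirectProduct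

theorem commute_inl_iff {g : PermutationalExtension H X} {f : FreeGroup X} :
    Commute g (inl f) ↔ g.left * freeGroupAction H X g.right f = f * g.left := by
  simp [Commute, SemiconjBy, SemidirectProduct.ext_iff]

theorem conjugateIntoFreeFactor_smul_of_commute {g : PermutationalExtension H X}
    {f : FreeGroup X} (hg : Commute g (inl f)) {T : Set X} (hT : ConjugateIntoFreeFactor f T) :
    ConjugateIntoFreeFactor f ((g.right • ·) '' T) := by
  obtain ⟨c, hc⟩ := hT
  have action_eq : freeGroupAction H X g.right f = g.left⁻¹ * f * g.left := by
    rw [mul_assoc, ← commute_inl_iff.1 hg, inv_mul_cancel_left]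
  have conj_eq : freeGroupAction H X g.right (c * f * c⁻¹) =
      freeGroupAction H X g.right c * g.left⁻¹ * f *
        (freeGroupAction H X g.right c * g.left⁻¹)⁻¹ := by
    rw [map_mul, map_mul, map_inv, action_eq]
    group
  exact ⟨_, by rw [← conj_eq, ← freeGroupAction_freeFactorRetraction, hc]⟩

/-- The elements commuting with `f` permute the minimal support of `f`, so the order of the
symmetric group on that support can be taken as `E`. -/
theorem exists_pow_smul_eq_of_commute (f : FreeGroup X) :
    ∃ (T : Set X) (E : ℕ), ConjugateIntoFreeFactor f T ∧ 0 < E ∧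
      ∀ g : PermutationalExtension H X, Commute g (inl f) → ∀ x ∈ T, g.right ^ E • x = x := by
  classical
  obtain ⟨T, hT, T_least⟩ := exists_least_conjugateIntoFreeFactor f
  refine ⟨T, Fintype.card (Equiv.Perm T), hT, Fintype.card_pos, fun g hg x hx => ?_⟩
  have card_image : ((T.map (MulAction.toPerm g.right).toEmbedding).card) ≤ T.card := by simp
  have image_eq : T = T.map (MulAction.toPerm g.right).toEmbedding :=
    Finset.eq_of_subset_of_card_le
      (by simpa [← Finset.coe_subset] using
        T_least _ (conjugateIntoFreeFactor_smul_of_commute hg hT)) card_image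
  have smul_mem_iff : ∀ y, MulAction.toPermHom H X g.right y ∈ T ↔ y ∈ T := fun y => by
    conv_lhs => rw [image_eq]
    simp
  have pow_eq_one :=
    pow_card_eq_one (x := (MulAction.toPermHom H X g.right).subtypePerm smul_mem_iff)
  simp only [Equiv.Perm.subtypePerm_pow, ← map_pow] at pow_eq_one
  exact congrArg Subtype.val (Equiv.congr_fun pow_eq_one ⟨x, hx⟩)

theorem exists_pow_smul_eq_of_commute_of_ne_one {f : FreeGroup X} (hf : f ≠ 1) :
    ∃ (x : X) (E : ℕ), 0 < E ∧
      ∀ g : PermutationalExtension H X, Commute g (inl f) → g.right ^ E • x = x := by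
  obtain ⟨T, E, hT, hE, fixes⟩ := exists_pow_smul_eq_of_commute (H := H) f
  obtain ⟨x, hx⟩ := nonempty_of_conjugateIntoFreeFactor hf hT
  exact ⟨x, E, hE, fun g hg => fixes g hg x hx⟩

theorem commute_of_freeGroupAction_eq_self {f : FreeGroup X} (hf : f ≠ 1)
    {a b : PermutationalExtension H X} (ha : Commute a (inl f)) (hb : Commute b (inl f))
    (ha_fix : freeGroupAction H X a.right f = f) (hb_fix : freeGroupAction H X b.right f = f)
    (hab : Commute a.right b.right) : Commute a b := by
  have ha_left : Commute f a.left := (ha_fix ▸ commute_inl_iff.1 ha :).symm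
  have hb_left : Commute f b.left := (hb_fix ▸ commute_inl_iff.1 hb :).symm
  refine SemidirectProduct.ext ?_ hab
  have ha_fix_b : freeGroupAction H X a.right b.left = b.left :=
    map_eq_of_commute_of_map_eq (freeGroupAction H X a.right).toMonoidHom hf ha_fix hb_left
  have hb_fix_a : freeGroupAction H X b.right a.left = a.left :=
    map_eq_of_commute_of_map_eq (freeGroupAction H X b.right).toMonoidHom hf hb_fix ha_left
  rw [mul_left, mul_left, ha_fix_b, hb_fix_a]
  exact commute_trans_of_ne_one hf ha_left hb_left

theorem exists_commute_pow_of_commute_right {f : FreeGroup X} (hf : f ≠ 1)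
    {a b : PermutationalExtension H X} (ha : Commute a (inl f)) (hb : Commute b (inl f))
    (hab : Commute a.right b.right) : ∃ E : ℕ, 0 < E ∧ Commute (a ^ E) (b ^ E) := by
  obtain ⟨T, E, ⟨c, hc⟩, hE, fixes⟩ := exists_pow_smul_eq_of_commute (H := H) f
  have right_conj (g : PermutationalExtension H X) :
      (inl c * g ^ E * (inl c)⁻¹).right = g.right ^ E := by
    change rightHom (inl c * g ^ E * (inl c)⁻¹) = rightHom g ^ E
    simp only [map_mul, map_pow, map_inv, rightHom_inl, one_mul, inv_one, mul_one]
  have commute_conj {g : PermutationalExtension H X} (hg : Commute g (inl f)) :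
      Commute (inl c * g ^ E * (inl c)⁻¹) (inl (c * f * c⁻¹)) := by
    simpa using (hg.pow_left E).conj (inl c)
  have fix_conj {g : PermutationalExtension H X} (hg : Commute g (inl f)) :
      freeGroupAction H X (inl c * g ^ E * (inl c)⁻¹).right (c * f * c⁻¹) = c * f * c⁻¹ := by
    rw [right_conj]
    exact freeGroupAction_eq_self_of_forall_smul_eq (fixes g hg) hc
  refine ⟨E, hE, (Commute.conj_iff (inl c)).1 (commute_of_freeGroupAction_eq_self
    (conj_eq_one_iff.not.2 hf) (commute_conj ha) (commute_conj hb) (fix_conj ha) (fix_conj hb) ?_)⟩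
  rw [right_conj, right_conj]
  exact hab.pow_pow E E

theorem commute_inr_inl_of_one {L : Subgroup H} {l : H} (hl : l ∈ L) :
    Commute (inr l : PermutationalExtension H (H ⧸ L))
      (inl (FreeGroup.of ((1 : H) : H ⧸ L))) := by
  have smul_eq : l • ((1 : H) : H ⧸ L) = ((1 : H) : H ⧸ L) :=
    QuotientGroup.eq.2 (by simpa using hl)
  rw [commute_inl_iff, left_inr, right_inr, freeGroupAction_of, smul_eq, one_mul, mul_one]

theorem exists_hom_extending {G : Type*} [Group G] {L : Subgroup H} (φ : H →* G) (t : G)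
    (ht : ∀ l ∈ L, Commute (φ l) t) :
    ∃ ψ : PermutationalExtension H (H ⧸ L) →* G,
      ψ (inl (FreeGroup.of ((1 : H) : H ⧸ L))) = t ∧ ∀ h, ψ (inr h) = φ h := by
  let conjugate : H ⧸ L → G := Quotient.lift (fun h => φ h * t * (φ h)⁻¹) fun a b hab => by
    obtain ⟨l, hl, rfl⟩ : ∃ l ∈ L, a * l = b :=
      ⟨a⁻¹ * b, QuotientGroup.leftRel_apply.1 hab, mul_inv_cancel_left a b⟩
    calc φ a * t * (φ a)⁻¹ = φ a * (t * φ l) * (φ l)⁻¹ * (φ a)⁻¹ := by group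
      _ = φ (a * l) * t * (φ (a * l))⁻¹ := by
        rw [← (ht l hl).eq, map_mul]
        group
  refine ⟨SemidirectProduct.lift (FreeGroup.lift conjugate) φ fun h => ?_, ?_, fun h => ?_⟩
  · ext x
    obtain ⟨g, rfl⟩ := QuotientGroup.mk_surjective x
    change FreeGroup.lift conjugate (freeGroupAction H (H ⧸ L) h (FreeGroup.of (g : H ⧸ L))) =
      φ h * FreeGroup.lift conjugate (FreeGroup.of (g : H ⧸ L)) * (φ h)⁻¹
    rw [freeGroupAction_of, FreeGroup.lift_apply_of, FreeGroup.lift_apply_of]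
    change φ (h * g) * t * (φ (h * g))⁻¹ = φ h * (φ g * t * (φ g)⁻¹) * (φ h)⁻¹
    rw [map_mul]
    group
  · rw [lift_inl, FreeGroup.lift_apply_of]
    change φ 1 * t * (φ 1)⁻¹ = t
    simp
  · exact lift_inr ..

end PermutationalExtension

end PermutationalExtension

/-! ### Ranks of abelian subgroups -/

section AbelianRank

variable {A : Type*} [CommGroup A] {Q R : Type*} [Group Q] [Group R]

/-- The kernel of a homomorphism out of an abelian group, as a `ℤ`-submodule. -/
def kerSubmodule (f : A →* Q) : Submodule ℤ (Additive A) :=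
  AddSubgroup.toIntSubmodule (Subgroup.toAddSubgroup f.ker)

theorem mem_kerSubmodule {f : A →* Q} {a : Additive A} :
    a ∈ kerSubmodule f ↔ f a.toMul = 1 :=
  Iff.rfl

/-- The torsion-free rank of the image of a homomorphism out of an abelian group. -/
noncomputable def imageRank (f : A →* Q) : ℕ :=
  Module.finrank ℤ (Additive A ⧸ kerSubmodule f)

theorem imageRank_of_injective {f : A →* Q} (hf : Function.Injective f) :
    imageRank f = Module.finrank ℤ (Additive A) := by
  have : kerSubmodule f = ⊥ := (Submodule.eq_bot_iff _).2 fun a ha =>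
    congrArg Additive.ofMul (hf (ha.trans (map_one f).symm))
  exact (Submodule.quotEquivOfEqBot _ this).finrank_eq

variable [Module.Finite ℤ (Additive A)]

theorem imageRank_le_of_pow_eq_one {f : A →* Q} {g : A →* R} {E : ℕ} (hE : E ≠ 0)
    (h : ∀ a, f a = 1 → g a ^ E = 1) : imageRank g ≤ imageRank f := by
  let mulE : (Additive A ⧸ kerSubmodule g) →ₗ[ℤ] (Additive A ⧸ kerSubmodule g) :=
    E • LinearMap.id
  have finrank_ker : Module.finrank ℤ (LinearMap.ker mulE) = 0 :=
    Module.finrank_eq_zero_iff.2 fun x =>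
      ⟨E, by exact_mod_cast hE, Subtype.ext (by rw [natCast_zsmul]; exact x.2)⟩
  have finrank_range : Module.finrank ℤ (LinearMap.range mulE) = imageRank g := by
    rw [← mulE.quotKerEquivRange.finrank_eq, ← add_zero (Module.finrank ℤ _), ← finrank_ker]
    exact (LinearMap.ker mulE).finrank_quotient_add_finrank
  let mulE_descended := (kerSubmodule f).liftQ (mulE.comp (kerSubmodule g).mkQ) fun a ha => by
    have : E • a ∈ kerSubmodule g := by
      rw [mem_kerSubmodule, toMul_nsmul, map_pow]
      exact h _ ha
    simpa [mulE, ← Submodule.Quotient.mk_smul] using this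
  have range_eq : LinearMap.range mulE_descended = LinearMap.range mulE := by
    rw [Submodule.range_liftQ, LinearMap.range_comp_of_range_eq_top _ (Submodule.range_mkQ _)]
  calc imageRank g = Module.finrank ℤ (LinearMap.range mulE_descended) := by
        rw [range_eq, finrank_range]
    _ ≤ imageRank f := LinearMap.finrank_range_le _

theorem imageRank_le_of_ker_le {f : A →* Q} {g : A →* R} (h : f.ker ≤ g.ker) :
    imageRank g ≤ imageRank f :=
  imageRank_le_of_pow_eq_one one_ne_zero fun _ ha => (pow_one _).trans (h ha)

theorem imageRank_comp_of_injective {j : Q →* R} (hj : Function.Injective j) (f : A →* Q) :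
    imageRank (j.comp f) = imageRank f := by
  have : (j.comp f).ker = f.ker := by
    ext a
    simp only [MonoidHom.mem_ker, MonoidHom.comp_apply, map_eq_one_iff j hj]
  exact le_antisymm (imageRank_le_of_ker_le this.ge) (imageRank_le_of_ker_le this.le)

theorem imageRank_le_imageRank_comp_add_one {π : Q →* R}
    (hπ : ∀ S ≤ π.ker, IsMulCommutative S → IsCyclic S) (f : A →* Q) :
    imageRank f ≤ imageRank (π.comp f) + 1 := by
  let K := kerSubmodule f
  let N := kerSubmodule (π.comp f)
  have K_le_N : K ≤ N := fun a ha => mem_kerSubmodule.2 (by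
    rw [MonoidHom.comp_apply, mem_kerSubmodule.1 ha, map_one])
  have : IsCyclic ((π.comp f).ker.map f) := hπ _ (by rintro _ ⟨a, ha, rfl⟩; exact ha) inferInstance
  obtain ⟨⟨_, a₀, ha₀, rfl⟩, generates⟩ := this.exists_generator
  have finrank_le_one : Module.finrank ℤ (N.map K.mkQ) ≤ 1 := by
    refine finrank_le_one ⟨K.mkQ (Additive.ofMul a₀), Submodule.mem_map_of_mem ha₀⟩ ?_
    rintro ⟨_, a, ha, rfl⟩
    obtain ⟨c, hc⟩ := generates ⟨f a.toMul, a.toMul, ha, rfl⟩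
    replace hc : f a₀ ^ c = f a.toMul := congrArg Subtype.val hc
    refine ⟨c, Subtype.ext ((Submodule.Quotient.eq _).2 (mem_kerSubmodule.2 ?_))⟩
    simp [hc]
  have finrank_eq : Module.finrank ℤ ((Additive A ⧸ K) ⧸ N.map K.mkQ) = imageRank (π.comp f) :=
    (Submodule.quotientQuotientEquivQuotient K N K_le_N).finrank_eq
  calc imageRank f
      = Module.finrank ℤ ((Additive A ⧸ K) ⧸ N.map K.mkQ) + Module.finrank ℤ (N.map K.mkQ) :=
        (N.map K.mkQ).finrank_quotient_add_finrank.symm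
    _ ≤ imageRank (π.comp f) + 1 := by
      rw [finrank_eq]
      exact Nat.add_le_add_left finrank_le_one _

end AbelianRank

section RankConditions

variable {Q R : Type*} [Group Q] [Group R]

/-- Finitely generated abelian subgroups of `Q` have torsion-free rank at most `r`. Subgroups are
given as images of homomorphisms so that they can be transported without choosing embeddings. -/
def AbelianRankLE (Q : Type*) [Group Q] (r : ℕ) : Prop :=
  ∀ (A : Type) [CommGroup A] [Module.Finite ℤ (Additive A)] (f : A →* Q), imageRank f ≤ r

/-- Any two elements centralizing an abelian subgroup of rank at least `k` have commuting powers. -/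
def CentralizersVirtuallyCommute (Q : Type*) [Group Q] (k : ℕ) : Prop :=
  ∀ (A : Type) [CommGroup A] [Module.Finite ℤ (Additive A)] (f : A →* Q) (a b : Q),
    k ≤ imageRank f → (∀ x, Commute a (f x)) → (∀ x, Commute b (f x)) →
    ∃ E : ℕ, 0 < E ∧ Commute (a ^ E) (b ^ E)

theorem AbelianRankLE.of_injective {r : ℕ} (h : AbelianRankLE R r) {j : Q →* R}
    (hj : Function.Injective j) : AbelianRankLE Q r := fun A _ _ f =>
  imageRank_comp_of_injective hj f ▸ h A (j.comp f)

theorem CentralizersVirtuallyCommute.of_injective {k : ℕ}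
    (h : CentralizersVirtuallyCommute R k) {j : Q →* R} (hj : Function.Injective j) :
    CentralizersVirtuallyCommute Q k := by
  intro A _ _ f a b hk ha hb
  obtain ⟨E, hE, commute_pow⟩ := h A (j.comp f) (j a) (j b)
    (by rwa [imageRank_comp_of_injective hj]) (fun x => (ha x).map j) (fun x => (hb x).map j)
  rw [← map_pow, ← map_pow] at commute_pow
  exact ⟨E, hE, Commute.of_map hj commute_pow⟩

end RankConditions

namespace PermutationalExtension

open SemidirectProduct

variable {H : Type*} [Group H]

theorem isCyclic_of_le_ker_rightHom {X : Type*} [MulAction H X] :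
    ∀ S ≤ (rightHom : PermutationalExtension H X →* H).ker, IsMulCommutative S → IsCyclic S := by
  intro S hS _
  rw [← range_inl_eq_ker_rightHom] at hS
  have : IsMulCommutative (S.comap (inl : FreeGroup X →* PermutationalExtension H X)) :=
    S.comap_injective_isMulCommutative inl_injective
  have := isCyclic_of_isFreeGroup_of_isMulCommutative
    (S.comap (inl : FreeGroup X →* PermutationalExtension H X))
  rw [← Subgroup.map_comap_eq_self hS]
  exact isCyclic_of_surjective _ (inl.subgroupMap_surjective _)

theorem exists_eq_inl_of_rightHom_eq_one {X : Type*} [MulAction H X]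
    {g : PermutationalExtension H X} (hg : rightHom g = 1) (hne : g ≠ 1) :
    ∃ f : FreeGroup X, f ≠ 1 ∧ inl f = g := by
  obtain ⟨f, rfl⟩ : g ∈ (inl : FreeGroup X →* PermutationalExtension H X).range := by
    rwa [range_inl_eq_ker_rightHom]
  exact ⟨f, fun hf => hne (hf ▸ map_one inl), rfl⟩

variable {L : Subgroup H}

/-- By minimality of the support, the centralizer of a free element virtually fixes a coset, whose
stabilizer is a conjugate of `L`. -/
theorem exists_conj_pow_mem_of_commute {f₀ : FreeGroup (H ⧸ L)} (hf₀ : f₀ ≠ 1) :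
    ∃ (E : ℕ) (g : H), 0 < E ∧ ∀ a : PermutationalExtension H (H ⧸ L), Commute a (inl f₀) →
      g⁻¹ * rightHom a ^ E * g ∈ L := by
  obtain ⟨x, E, hE, fixes⟩ := exists_pow_smul_eq_of_commute_of_ne_one (H := H) hf₀
  obtain ⟨g, rfl⟩ := QuotientGroup.mk_surjective x
  refine ⟨E, g, hE, fun a ha => ?_⟩
  rw [mul_assoc]
  exact QuotientGroup.eq.1 (fixes a ha).symm

variable {A : Type} [CommGroup A] [Module.Finite ℤ (Additive A)]

theorem imageRank_rightHom_comp_le {r : ℕ} (hL : AbelianRankLE L r)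
    (f : A →* PermutationalExtension H (H ⧸ L)) {f₀ : FreeGroup (H ⧸ L)} (hf₀ : f₀ ≠ 1)
    (hf : ∀ x, Commute (f x) (inl f₀)) : imageRank (rightHom.comp f) ≤ r := by
  obtain ⟨E, g, hE, mem_L⟩ := exists_conj_pow_mem_of_commute (H := H) hf₀
  let conjPow : A →* L :=
    ((MulAut.conj g⁻¹).toMonoidHom.comp ((rightHom.comp f).comp (powMonoidHom E))).codRestrict L
      fun x => by
        change g⁻¹ * rightHom (f (x ^ E)) * g⁻¹⁻¹ ∈ L
        rw [map_pow, map_pow, inv_inv]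
        exact mem_L (f x) (hf x)
  refine (imageRank_le_of_pow_eq_one (f := conjPow) hE.ne' fun x hx => ?_).trans (hL A conjPow)
  have conj_eq_one : g⁻¹ * rightHom (f (x ^ E)) * g⁻¹⁻¹ = 1 := congrArg Subtype.val hx
  rw [map_pow, map_pow] at conj_eq_one
  exact conj_eq_one_iff.1 conj_eq_one

theorem abelianRankLE {r : ℕ} (hH : AbelianRankLE H (r + 1)) (hL : AbelianRankLE L r) :
    AbelianRankLE (PermutationalExtension H (H ⧸ L)) (r + 1) := by
  intro A _ _ f
  by_cases hker : (rightHom.comp f).ker ≤ f.ker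
  · exact (imageRank_le_of_ker_le hker).trans (hH A _)
  · obtain ⟨x₀, hx₀, f_x₀_ne⟩ := SetLike.not_le_iff_exists.1 hker
    obtain ⟨f₀, hf₀, eq⟩ := exists_eq_inl_of_rightHom_eq_one hx₀ f_x₀_ne
    have rank_right := imageRank_rightHom_comp_le hL f hf₀ fun x =>
      eq ▸ (Commute.all x x₀).map f
    have := imageRank_le_imageRank_comp_add_one isCyclic_of_le_ker_rightHom f
    lia

end PermutationalExtension

section CentralSplitting

variable {H Q : Type*} [Group H] [Group Q] {χ : H →* Multiplicative ℤ} {π : H →* Q}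

theorem isCyclic_of_le_ker_of_prod_injective (hχπ : Function.Injective (χ.prod π))
    {S : Subgroup H} (hS : S ≤ π.ker) : IsCyclic S :=
  isCyclic_of_injective (χ.comp S.subtype) fun x y hxy =>
    Subtype.ext (hχπ (Prod.ext hxy ((hS x.2).trans (hS y.2).symm)))

theorem imageRank_le_of_prod_injective {A : Type*} [CommGroup A] [Module.Finite ℤ (Additive A)]
    (hχπ : Function.Injective (χ.prod π)) (f : A →* H) :
    imageRank f ≤ imageRank (π.comp f) + 1 :=
  imageRank_le_imageRank_comp_add_one
    (fun _ hS _ => isCyclic_of_le_ker_of_prod_injective hχπ hS) f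

theorem CentralizersVirtuallyCommute.exists_commute_pow_of_prod_injective {k : ℕ}
    (hQ : CentralizersVirtuallyCommute Q k) (hχπ : Function.Injective (χ.prod π)) {A : Type}
    [CommGroup A] [Module.Finite ℤ (Additive A)] {f : A →* H} (hk : k ≤ imageRank (π.comp f))
    {a b : H} (ha : ∀ x, Commute a (f x)) (hb : ∀ x, Commute b (f x)) :
    ∃ E : ℕ, 0 < E ∧ Commute (a ^ E) (b ^ E) := by
  obtain ⟨E, hE, commute_pow⟩ := hQ A (π.comp f) (π a) (π b) hk (fun x => (ha x).map π)
    (fun x => (hb x).map π)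
  rw [← map_pow, ← map_pow] at commute_pow
  exact ⟨E, hE, Commute.of_map hχπ (Prod.ext (mul_comm _ _) commute_pow)⟩

end CentralSplitting

namespace PermutationalExtension

open SemidirectProduct

variable {H Q : Type*} [Group H] [Group Q] {L : Subgroup H} {A : Type} [CommGroup A]
  [Module.Finite ℤ (Additive A)] {χ : H →* Multiplicative ℤ} {π : H →* Q} {k : ℕ}

theorem comp_rightHom_eq_one_of_commute (hLχ : L ≤ χ.ker) {f₀ : FreeGroup (H ⧸ L)}
    (hf₀ : f₀ ≠ 1) {a : PermutationalExtension H (H ⧸ L)} (ha : Commute a (inl f₀)) :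
    χ (rightHom a) = 1 := by
  obtain ⟨E, g, hE, mem_L⟩ := exists_conj_pow_mem_of_commute (H := H) hf₀
  have pow_eq_one : χ (g⁻¹ * rightHom a ^ E * g) = 1 := hLχ (mem_L a ha)
  rw [map_mul, map_mul, map_inv, mul_right_comm, inv_mul_cancel, one_mul, map_pow] at pow_eq_one
  exact (pow_eq_one_iff_left hE.ne').1 pow_eq_one

theorem exists_commute_pow_of_commute_inl (hχπ : Function.Injective (χ.prod π))
    (hLχ : L ≤ χ.ker) (hQ : CentralizersVirtuallyCommute Q k) (hL : AbelianRankLE L k)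
    {f : A →* PermutationalExtension H (H ⧸ L)} (hk : k + 1 ≤ imageRank f)
    {f₀ : FreeGroup (H ⧸ L)} (hf₀ : f₀ ≠ 1) (hf : ∀ x, Commute (f x) (inl f₀))
    {a b : PermutationalExtension H (H ⧸ L)} (ha : ∀ x, Commute a (f x))
    (hb : ∀ x, Commute b (f x)) : ∃ E : ℕ, 0 < E ∧ Commute (a ^ E) (b ^ E) := by
  have rank_right_le := imageRank_rightHom_comp_le hL f hf₀ hf
  have rank_le := imageRank_le_imageRank_comp_add_one isCyclic_of_le_ker_rightHom f
  obtain ⟨x₁, hx₁, f_x₁_ne⟩ : ∃ x ∈ (rightHom.comp f).ker, x ∉ f.ker :=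
    SetLike.not_le_iff_exists.1 fun hker => by
      have := imageRank_le_of_ker_le hker
      lia
  obtain ⟨f₁, hf₁, eq⟩ := exists_eq_inl_of_rightHom_eq_one hx₁ f_x₁_ne
  have rank_right_le_rank_π : imageRank (rightHom.comp f) ≤
      imageRank (π.comp (rightHom.comp f)) :=
    imageRank_le_of_ker_le fun x hx => hχπ (Prod.ext
      ((comp_rightHom_eq_one_of_commute hLχ hf₀ (hf x)).trans (map_one χ).symm)
      (MonoidHom.mem_ker.1 hx |>.trans (map_one π).symm))
  obtain ⟨E, hE, commute_right⟩ := hQ.exists_commute_pow_of_prod_injective hχπ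
    (by lia : k ≤ imageRank (π.comp (rightHom.comp f)))
    (fun x => (ha x).map rightHom) (fun x => (hb x).map rightHom)
  rw [← map_pow, ← map_pow] at commute_right
  obtain ⟨E', hE', commute_pow⟩ := exists_commute_pow_of_commute_right hf₁
    (eq ▸ (ha x₁).pow_left E) (eq ▸ (hb x₁).pow_left E) commute_right
  exact ⟨E * E', Nat.mul_pos hE hE', by rwa [pow_mul, pow_mul]⟩

theorem centralizersVirtuallyCommute (hχπ : Function.Injective (χ.prod π)) (hLχ : L ≤ χ.ker)
    (hQ : CentralizersVirtuallyCommute Q k) (hL : AbelianRankLE L k) :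
    CentralizersVirtuallyCommute (PermutationalExtension H (H ⧸ L)) (k + 1) := by
  intro A _ _ f a b hk ha hb
  by_cases hfree : ∃ f₀ : FreeGroup (H ⧸ L), f₀ ≠ 1 ∧ ∀ x, Commute (f x) (inl f₀)
  · obtain ⟨f₀, hf₀, hf⟩ := hfree
    exact exists_commute_pow_of_commute_inl hχπ hLχ hQ hL hk hf₀ hf ha hb
  have eq_one_of_commute {g : PermutationalExtension H (H ⧸ L)} (hg : rightHom g = 1)
      (hgf : ∀ x, Commute (f x) g) : g = 1 := by
    by_contra hne
    obtain ⟨f₀, hf₀, rfl⟩ := exists_eq_inl_of_rightHom_eq_one hg hne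
    exact hfree ⟨f₀, hf₀, hgf⟩
  have rank_le_rank_right : imageRank f ≤ imageRank (rightHom.comp f) :=
    imageRank_le_of_ker_le fun x hx =>
      eq_one_of_commute hx fun y => (Commute.all y x).map f
  have rank_right_le := imageRank_le_of_prod_injective hχπ (rightHom.comp f)
  obtain ⟨E, hE, commute_right⟩ := hQ.exists_commute_pow_of_prod_injective hχπ
    (by lia : k ≤ imageRank (π.comp (rightHom.comp f)))
    (fun x => (ha x).map rightHom) (fun x => (hb x).map rightHom)
  refine ⟨E, hE, commutatorElement_eq_one_iff_commute.1 (eq_one_of_commute ?_ fun x => ?_)⟩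
  · rwa [map_commutatorElement, commutatorElement_eq_one_iff_commute, map_pow, map_pow]
  · have ha_pow := (ha x).symm.pow_right E
    have hb_pow := (hb x).symm.pow_right E
    exact ((ha_pow.mul_right hb_pow).mul_right ha_pow.inv_right).mul_right hb_pow.inv_right

end PermutationalExtension

/-! ### Right-angled Artin groups -/

namespace RAAG

variable {V W : Type} {Γ : SimpleGraph V} {Λ : SimpleGraph W}

/-- The generator of `RAAG Γ` attached to a vertex. -/
abbrev of (Γ : SimpleGraph V) (v : V) : RAAG Γ := PresentedGroup.of v

theorem commute_of_of_adj {u v : V} (h : Γ.Adj u v) : Commute (of Γ u) (of Γ v) := by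
  have : PresentedGroup.mk (raagRels Γ) _ = 1 :=
    PresentedGroup.one_of_mem ⟨u, v, h, rfl⟩
  rwa [← commutatorElement_def, map_commutatorElement,
    commutatorElement_eq_one_iff_commute] at this

section Lift

variable {Q : Type*} [Group Q]

/-- The universal property of `RAAG Γ`. -/
def lift (x : V → Q) (hx : ∀ u v, Γ.Adj u v → Commute (x u) (x v)) : RAAG Γ →* Q :=
  PresentedGroup.toGroup (f := x) <| by
    rintro _ ⟨u, v, huv, rfl⟩
    rw [← commutatorElement_def, map_commutatorElement, commutatorElement_eq_one_iff_commute,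
      FreeGroup.lift_apply_of, FreeGroup.lift_apply_of]
    exact hx u v huv

@[simp]
theorem lift_of (x : V → Q) (hx : ∀ u v, Γ.Adj u v → Commute (x u) (x v)) (v : V) :
    lift x hx (of Γ v) = x v :=
  PresentedGroup.toGroup.of _

theorem injective_of_forall_of {φ : RAAG Γ →* Q} {ψ : Q →* RAAG Γ}
    (h : ∀ v, ψ (φ (of Γ v)) = of Γ v) : Function.Injective φ := by
  have : ψ.comp φ = MonoidHom.id _ := PresentedGroup.ext h
  exact Function.LeftInverse.injective (DFunLike.congr_fun this)

theorem commute_map_of_forall_commute_of {φ : RAAG Γ →* Q} {q : Q}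
    (h : ∀ v, Commute q (φ (of Γ v))) (x : RAAG Γ) : Commute q (φ x) := by
  have : (MulAut.conj q).toMonoidHom.comp φ = φ :=
    PresentedGroup.ext fun v => mul_inv_eq_iff_eq_mul.2 (h v).eq
  exact mul_inv_eq_iff_eq_mul.1 (DFunLike.congr_fun this x)

end Lift

/-- The homomorphism of right-angled Artin groups induced by a graph homomorphism. -/
def map (e : Γ →g Λ) : RAAG Γ →* RAAG Λ :=
  lift (fun v => of Λ (e v)) fun _ _ h => commute_of_of_adj (e.map_adj h)

@[simp]
theorem map_of (e : Γ →g Λ) (v : V) : map e (of Γ v) = of Λ (e v) :=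
  lift_of ..

/-- The retraction associated with an induced subgraph, killing the vertices outside it. -/
noncomputable def retraction (e : Γ ↪g Λ) : RAAG Λ →* RAAG Γ :=
  lift (Function.extend e (of Γ) 1) fun u v huv => by
    by_cases hu : ∃ a, e a = u
    · by_cases hv : ∃ b, e b = v
      · obtain ⟨a, rfl⟩ := hu
        obtain ⟨b, rfl⟩ := hv
        rw [e.injective.extend_apply, e.injective.extend_apply]
        exact commute_of_of_adj (e.map_adj_iff.1 huv)
      · rw [Function.extend_apply' _ _ _ hv]
        exact Commute.one_right _
    · rw [Function.extend_apply' _ _ _ hu]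
      exact Commute.one_left _

@[simp]
theorem retraction_of (e : Γ ↪g Λ) (v : V) : retraction e (of Λ (e v)) = of Γ v := by
  rw [retraction, lift_of, e.injective.extend_apply]

theorem retraction_of_of_notMem_range {e : Γ ↪g Λ} {u : W} (hu : u ∉ Set.range e) :
    retraction e (of Λ u) = 1 :=
  (lift_of ..).trans (Function.extend_apply' _ _ _ hu)

theorem map_injective (e : Γ ↪g Λ) : Function.Injective (map e.toHom) :=
  injective_of_forall_of (ψ := retraction e) fun v => by
    rw [map_of]
    exact retraction_of e v

theorem not_commute_pow_of_not_adj {u v : V} (huv : u ≠ v) (h : ¬Γ.Adj u v) {E : ℕ}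
    (hE : 0 < E) : ¬Commute (of Γ u ^ E) (of Γ v ^ E) := by
  classical
  intro commute_pow
  let toFree : RAAG Γ →* FreeGroup V :=
    lift (fun x => if x = u ∨ x = v then FreeGroup.of x else 1) fun x y hxy => by
      split_ifs with hx hy
      · rcases hx with rfl | rfl <;> rcases hy with rfl | rfl
        exacts [.refl _, (h hxy).elim, (h hxy.symm).elim, .refl _]
      all_goals simp
  have toFree_u : toFree (of Γ u) = FreeGroup.of u := (lift_of ..).trans (if_pos (.inl rfl))
  have toFree_v : toFree (of Γ v) = FreeGroup.of v := (lift_of ..).trans (if_pos (.inr rfl))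
  have commute_free := commute_pow.map toFree
  have hE' : (E : ℤ) ≠ 0 := by exact_mod_cast hE.ne'
  rw [map_pow, map_pow, toFree_u, toFree_v, ← zpow_natCast, ← zpow_natCast] at commute_free
  exact huv (eq_of_commute_freeGroup_of
    (commute_of_commute_zpow hE' (commute_of_commute_zpow hE' commute_free).symm).symm)

section CliqueSubgroup

variable {s : Finset V}

/-- The homomorphism from a free abelian group onto the subgroup of `RAAG Γ` generated by a
clique. -/
noncomputable def cliqueHom (hs : Γ.IsClique s) : (s → Multiplicative ℤ) →* RAAG Γ :=
  MonoidHom.noncommPiCoprod (fun v : s => zpowersHom (RAAG Γ) (of Γ v)) fun u v huv _ _ =>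
    (commute_of_of_adj (hs u.2 v.2 (Subtype.coe_ne_coe.2 huv))).zpow_zpow _ _

theorem cliqueHom_injective (hs : Γ.IsClique s) : Function.Injective (cliqueHom hs) := by
  classical
  let exponents : RAAG Γ →* (s → Multiplicative ℤ) :=
    lift (fun v => if h : v ∈ s then Pi.mulSingle ⟨v, h⟩ (Multiplicative.ofAdd 1) else 1)
      fun _ _ _ => Commute.all _ _
  suffices exponents.comp (cliqueHom hs) = MonoidHom.id _ from
    Function.LeftInverse.injective (DFunLike.congr_fun this)
  refine MonoidHom.functions_ext _ _ _ fun v n => ?_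
  have exponents_of : exponents (of Γ v) = Pi.mulSingle v (Multiplicative.ofAdd 1) :=
    (lift_of ..).trans (dif_pos v.2)
  calc exponents (cliqueHom hs (Pi.mulSingle v n)) = exponents (of Γ v ^ n.toAdd) :=
        congrArg exponents
          (MonoidHom.noncommPiCoprod_mulSingle (N := fun _ : s => Multiplicative ℤ) _ v n)
    _ = Pi.mulSingle v n := by
      rw [map_zpow, exponents_of, ← Pi.mulSingle_zpow, ← ofAdd_zsmul]
      simp

theorem commute_cliqueHom (hs : Γ.IsClique s) {x : RAAG Γ} (hx : ∀ v ∈ s, Commute x (of Γ v))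
    (y : s → Multiplicative ℤ) : Commute x (cliqueHom hs y) :=
  MonoidHom.commute_noncommPiCoprod _ (fun (v : s) _ => (hx v v.2).zpow_right _) y

theorem imageRank_cliqueHom (hs : Γ.IsClique s) : imageRank (cliqueHom hs) = s.card := by
  let e : Additive (s → Multiplicative ℤ) ≃+ (s → ℤ) := AddEquiv.refl _
  rw [imageRank_of_injective (cliqueHom_injective hs), e.toIntLinearEquiv.finrank_eq,
    Module.finrank_fintype_fun_eq_card, Fintype.card_coe]

end CliqueSubgroup

section VertexDeletion

open SemidirectProduct

variable (Γ : SimpleGraph V) (v : V)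

/-- The homomorphism from the right-angled Artin group on the neighbours of `v` to that of the
graph with `v` deleted. -/
def linkHom : RAAG (Γ.induce (Γ.neighborSet v)) →* RAAG (Γ.induce {v}ᶜ) :=
  map (induceHomOfLE Γ (Γ.neighborSet_subset_compl v)).toHom

/-- The standard parabolic subgroup on the neighbours of `v`, inside the right-angled Artin group
of the graph with `v` deleted. -/
def linkSubgroup : Subgroup (RAAG (Γ.induce {v}ᶜ)) :=
  (linkHom Γ v).range

variable {Γ v}

theorem linkHom_of (u : Γ.neighborSet v) : linkHom Γ v (of _ u) =
    of (Γ.induce {v}ᶜ) ⟨u, Γ.neighborSet_subset_compl v u.2⟩ :=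
  map_of ..

theorem abelianRankLE_linkSubgroup {r : ℕ}
    (h : AbelianRankLE (RAAG (Γ.induce (Γ.neighborSet v))) r) :
    AbelianRankLE (linkSubgroup Γ v) r :=
  h.of_injective (j := (MonoidHom.ofInjective (f := linkHom Γ v)
    (map_injective _)).symm.toMonoidHom) (MulEquiv.injective _)

theorem commute_map_of_mem_linkSubgroup :
    ∀ l ∈ linkSubgroup Γ v, Commute (map (Embedding.induce {v}ᶜ).toHom l) (of Γ v) := by
  rintro _ ⟨x, rfl⟩
  refine (commute_map_of_forall_commute_of
    (φ := (map (Embedding.induce {v}ᶜ).toHom).comp (linkHom Γ v)) (fun u => ?_) x).symm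
  rw [MonoidHom.comp_apply, linkHom_of, map_of]
  exact commute_of_of_adj u.2

variable (Γ v)

/-- Deleting `v` exhibits `RAAG Γ` as an HNN extension with stable letter `v`. -/
theorem exists_injective_permutationalExtension :
    ∃ φ : RAAG Γ →* PermutationalExtension (RAAG (Γ.induce {v}ᶜ))
      (RAAG (Γ.induce {v}ᶜ) ⧸ linkSubgroup Γ v), Function.Injective φ := by
  classical
  let H := RAAG (Γ.induce {v}ᶜ)
  let L : Subgroup H := linkSubgroup Γ v
  let stable : PermutationalExtension H (H ⧸ L) := inl (FreeGroup.of ((1 : H) : H ⧸ L))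
  have commute_stable (u : V) (huv : u ≠ v) (hadj : Γ.Adj v u) :
      Commute (inr (of (Γ.induce {v}ᶜ) ⟨u, huv⟩)) stable :=
    PermutationalExtension.commute_inr_inl_of_one ⟨_, linkHom_of ⟨u, hadj⟩⟩
  let φ : RAAG Γ →* PermutationalExtension H (H ⧸ L) :=
    lift (fun u => if hu : u = v then stable else inr (of (Γ.induce {v}ᶜ) ⟨u, hu⟩))
      fun u w huw => by
        split_ifs with hu hw hw
        · exact .refl _
        · exact (commute_stable w hw (hu ▸ huw)).symm
        · exact commute_stable u hu (hw ▸ huw.symm)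
        · exact (commute_of_of_adj
            (show (Γ.induce {v}ᶜ).Adj ⟨u, hu⟩ ⟨w, hw⟩ from huw)).map inr
  obtain ⟨ψ, ψ_stable, ψ_inr⟩ := PermutationalExtension.exists_hom_extending
    (map (Embedding.induce {v}ᶜ).toHom) (of Γ v) commute_map_of_mem_linkSubgroup
  refine ⟨φ, injective_of_forall_of (ψ := ψ) fun u => ?_⟩
  rw [lift_of]
  split_ifs with hu
  · rw [ψ_stable, hu]
  · rw [ψ_inr]
    exact map_of ..

end VertexDeletion

section CentralVertex

variable {w : V}

/-- The exponent sum of the generator at `w`. -/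
noncomputable def exponentSum (Γ : SimpleGraph V) (w : V) : RAAG Γ →* Multiplicative ℤ :=
  open Classical in lift (Pi.mulSingle w (Multiplicative.ofAdd 1)) fun _ _ _ => Commute.all _ _

theorem exponentSum_of_self : exponentSum Γ w (of Γ w) = Multiplicative.ofAdd 1 := by
  classical exact (lift_of ..).trans (Pi.mulSingle_eq_same ..)

theorem exponentSum_of_of_ne {u : V} (h : u ≠ w) : exponentSum Γ w (of Γ u) = 1 := by
  classical exact (lift_of ..).trans (Pi.mulSingle_eq_of_ne h _)

theorem exponentSum_prod_retraction_injective (hw : Γ.IsUniversal w) :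
    Function.Injective
      ((exponentSum Γ w).prod (retraction (Embedding.induce (G := Γ) {w}ᶜ))) := by
  let inclusion : RAAG (Γ.induce {w}ᶜ) →* RAAG Γ := map (Embedding.induce {w}ᶜ).toHom
  have commute_inclusion : ∀ x, Commute (of Γ w) (inclusion x) :=
    commute_map_of_forall_commute_of fun u => by
      rw [map_of]
      exact commute_of_of_adj (hw (Ne.symm u.2))
  let inverse : Multiplicative ℤ × RAAG (Γ.induce {w}ᶜ) →* RAAG Γ :=
    (zpowersHom _ (of Γ w)).noncommCoprod inclusion
      fun _ x => (commute_inclusion x).zpow_left _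
  refine injective_of_forall_of (ψ := inverse) fun u => ?_
  change zpowersHom _ (of Γ w) (exponentSum Γ w (of Γ u)) *
    inclusion (retraction (Embedding.induce {w}ᶜ) (of Γ u)) = of Γ u
  by_cases hu : u = w
  · have notMem : w ∉ Set.range (Embedding.induce (G := Γ) {w}ᶜ) := by simp
    rw [hu, exponentSum_of_self, retraction_of_of_notMem_range notMem, map_one inclusion, mul_one]
    exact zpow_one (of Γ w)
  · rw [exponentSum_of_of_ne hu, map_one, one_mul]
    exact (congrArg inclusion (retraction_of (Embedding.induce {w}ᶜ) ⟨u, hu⟩)).trans (map_of ..)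

theorem linkSubgroup_le_ker_exponentSum {v : V} (hw : w ≠ v) (h : ¬Γ.Adj v w) :
    linkSubgroup Γ v ≤ (exponentSum (Γ.induce {v}ᶜ) ⟨w, hw⟩).ker := by
  suffices (exponentSum (Γ.induce {v}ᶜ) ⟨w, hw⟩).comp (linkHom Γ v) = 1 by
    rintro _ ⟨x, rfl⟩
    exact DFunLike.congr_fun this x
  refine PresentedGroup.ext fun u => ?_
  have hu : (u : V) ≠ w := fun hu => h (hu ▸ u.2)
  exact (congrArg _ (linkHom_of u)).trans
    (exponentSum_of_of_ne fun h => hu (congrArg Subtype.val h))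

end CentralVertex

end RAAG

/-! ### Cliques and suspensions -/

theorem exists_existsUnique_adj_of_isAcyclic {V : Type*} {G : SimpleGraph V} [Finite G.edgeSet]
    (hG : G.IsAcyclic) (hne : G ≠ ⊥) : ∃ w, ∃! v, G.Adj w v := by
  obtain ⟨x, y, hxy⟩ := ne_bot_iff_exists_adj.1 hne
  have : Nonempty V := ⟨x⟩
  obtain ⟨w, z, p, hp, longest⟩ := Walk.exists_isPath_forall_isPath_length_le_length G
  have not_nil : ¬p.Nil := fun hnil => by
    have one_le := longest _ _ hxy.toWalk (Walk.IsPath.of_adj hxy)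
    simp [Walk.length_eq_zero_iff.2 hnil] at one_le
  refine ⟨w, p.snd, p.adj_snd not_nil, fun u hu => hG.eq_snd_of_adj_start hp hu ?_⟩
  by_contra notMem
  have length_le := longest _ _ _ (hp.cons (h := hu.symm) notMem)
  simp at length_le

section Cliques

variable {V : Type*} {Γ : SimpleGraph V} {v : V} {n : ℕ}

theorem exists_isNClique_of_not_cliqueFree_induce_neighborSet
    (h : ¬(Γ.induce (Γ.neighborSet v)).CliqueFree n) :
    ∃ s : Finset V, Γ.IsNClique n s ∧ ∀ x ∈ s, Γ.Adj v x := by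
  obtain ⟨s, hs⟩ := not_forall_not.1 h
  refine ⟨s.map (Function.Embedding.subtype _), hs.map.mono (map_comap_le ..), fun x hx => ?_⟩
  obtain ⟨y, -, rfl⟩ := Finset.mem_map.1 hx
  exact y.2

theorem cliqueFree_induce_neighborSet (h : Γ.CliqueFree (n + 1)) (v : V) :
    (Γ.induce (Γ.neighborSet v)).CliqueFree n := by
  classical
  by_contra not_cliqueFree
  obtain ⟨s, hs, adj⟩ := exists_isNClique_of_not_cliqueFree_induce_neighborSet not_cliqueFree
  exact h _ (hs.insert adj)

/-- `Γ` contains the join of a `k`-clique with two non-adjacent vertices. In the right-angled Artin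
group this gives a free group of rank two commuting with a free abelian group of rank `k`. -/
def HasCliqueSuspension (Γ : SimpleGraph V) (k : ℕ) : Prop :=
  ∃ (s : Finset V) (u v : V), Γ.IsNClique k s ∧ u ≠ v ∧ ¬Γ.Adj u v ∧
    ∀ x ∈ s, Γ.Adj u x ∧ Γ.Adj v x

theorem cliqueFree_induce_neighborSet_of_isUniversal {w : V} (hwv : w ≠ v) (not_adj : ¬Γ.Adj v w)
    (hw : (Γ.induce {v}ᶜ).IsUniversal ⟨w, hwv⟩) (h : ¬HasCliqueSuspension Γ n) :
    (Γ.induce (Γ.neighborSet v)).CliqueFree n := by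
  by_contra not_cliqueFree
  obtain ⟨s, hs, adj⟩ := exists_isNClique_of_not_cliqueFree_induce_neighborSet not_cliqueFree
  refine h ⟨s, v, w, hs, hwv.symm, not_adj, fun x hx => ⟨adj x hx, ?_⟩⟩
  refine hw (w := ⟨x, (adj x hx).ne'⟩) (Subtype.coe_ne_coe.1 ?_)
  rintro rfl
  exact not_adj (adj _ hx)

theorem HasCliqueSuspension.map {W : Type*} {Λ : SimpleGraph W} {k : ℕ}
    (h : HasCliqueSuspension Γ k) (e : Γ ↪g Λ) : HasCliqueSuspension Λ k := by
  obtain ⟨s, u, v, hs, huv, not_adj, adj⟩ := h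
  refine ⟨s.map e.toEmbedding, e u, e v, ?_, e.injective.ne huv,
    not_adj ∘ e.map_adj_iff.1, fun x hx => ?_⟩
  · exact hs.map.mono (map_le_iff_le_comap _ _ _ |>.2 fun _ _ => e.map_adj_iff.2)
  · obtain ⟨y, hy, rfl⟩ := Finset.mem_map.1 hx
    exact ⟨e.map_adj_iff.2 (adj y hy).1, e.map_adj_iff.2 (adj y hy).2⟩

theorem hasCliqueSuspension_of_induce_compl {w : V} {k : ℕ} (hw : Γ.IsUniversal w)
    (h : HasCliqueSuspension (Γ.induce {w}ᶜ) k) : HasCliqueSuspension Γ (k + 1) := by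
  classical
  obtain ⟨s, u, v, hs, huv, not_adj, adj⟩ := h
  let incl : ({w}ᶜ : Set V) ↪ V := Function.Embedding.subtype _
  have adj_of_mem {y : ({w}ᶜ : Set V)} (hy : ∀ x ∈ s, (Γ.induce {w}ᶜ).Adj y x) :
      ∀ x ∈ insert w (s.map incl), Γ.Adj y x := by
    simp only [Finset.forall_mem_insert, Finset.forall_mem_map]
    exact ⟨(hw (Ne.symm y.2)).symm, fun x hx => hy x hx⟩
  refine ⟨insert w (s.map incl), u, v, ?_, Subtype.coe_ne_coe.2 huv, not_adj, fun x hx =>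
    ⟨adj_of_mem (fun x hx => (adj x hx).1) x hx, adj_of_mem (fun x hx => (adj x hx).2) x hx⟩⟩
  refine (hs.map.mono (map_comap_le incl Γ)).insert ?_
  simp only [Finset.forall_mem_map]
  exact fun x _ => hw (Ne.symm x.2)

end Cliques

namespace RAAG

variable {V W : Type} {Γ : SimpleGraph V} {Λ : SimpleGraph W}

theorem abelianRankLE_of_isEmpty [IsEmpty V] (r : ℕ) : AbelianRankLE (RAAG Γ) r := by
  intro A _ _ f
  have id_eq_one : MonoidHom.id (RAAG Γ) = 1 := PresentedGroup.ext isEmptyElim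
  have : Subsingleton (Additive A ⧸ kerSubmodule f) := Submodule.Quotient.subsingleton_iff.2
    (eq_top_iff.2 fun a _ => DFunLike.congr_fun id_eq_one (f a.toMul))
  exact Module.finrank_zero_of_subsingleton.trans_le r.zero_le

theorem abelianRankLE_of_cliqueFree [Finite V] {r : ℕ} (h : Γ.CliqueFree (r + 1)) :
    AbelianRankLE (RAAG Γ) r := by
  induction hn : Nat.card V using Nat.strong_induction_on generalizing V r with
  | _ n ih =>
    subst hn
    rcases isEmpty_or_nonempty V with _ | ⟨⟨v⟩⟩
    · exact abelianRankLE_of_isEmpty r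
    cases r with
    | zero => exact (h {v} (by simp [isNClique_singleton])).elim
    | succ r =>
      obtain ⟨φ, hφ⟩ := exists_injective_permutationalExtension Γ v
      have rank_compl : AbelianRankLE (RAAG (Γ.induce {v}ᶜ)) (r + 1) :=
        ih _ (Finite.card_subtype_lt (x := v) (by simp))
          (h.comap (Embedding.induce _).isContained) rfl
      have rank_link : AbelianRankLE (RAAG (Γ.induce (Γ.neighborSet v))) r :=
        ih _ (Finite.card_subtype_lt (x := v) (by simp)) (cliqueFree_induce_neighborSet h v) rfl
      exact (PermutationalExtension.abelianRankLE rank_compl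
        (abelianRankLE_linkSubgroup rank_link)).of_injective hφ

theorem exists_isNClique_of_injective [Finite W] {φ : RAAG Γ →* RAAG Λ}
    (hφ : Function.Injective φ) {n : ℕ} {s : Finset V} (hs : Γ.IsNClique n s) :
    ∃ t, Λ.IsNClique n t := by
  obtain _ | n := n
  · exact ⟨∅, isNClique_empty.2 rfl⟩
  by_contra no_clique
  have rank_le : imageRank (φ.comp (cliqueHom hs.1)) ≤ n :=
    abelianRankLE_of_cliqueFree (not_exists.1 no_clique) _ _
  rw [imageRank_comp_of_injective hφ, imageRank_cliqueHom, hs.card_eq] at rank_le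
  exact n.lt_irrefl rank_le

theorem commute_of_eq_top (h : Γ = ⊤) (x y : RAAG Γ) : Commute x y := by
  subst h
  refine commute_map_of_forall_commute_of (φ := MonoidHom.id _) (fun v => Commute.symm ?_) y
  refine commute_map_of_forall_commute_of (φ := MonoidHom.id _) (fun u => ?_) x
  obtain rfl | huv := eq_or_ne u v
  exacts [.refl _, (commute_of_of_adj huv).symm]

theorem centralizersVirtuallyCommute_of_eq_top (h : Γ = ⊤) (k : ℕ) :
    CentralizersVirtuallyCommute (RAAG Γ) k :=
  fun _ _ _ _ _ _ _ _ _ => ⟨1, one_pos, commute_of_eq_top h _ _⟩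

/-- Deleting a neighbour of a leaf of `Γᶜ` leaves the leaf adjacent in `Γ` to everything else, so it
generates a central direct factor. -/
theorem centralizersVirtuallyCommute_of_not_hasCliqueSuspension [Finite V] {k : ℕ}
    (hΓ : Γᶜ.IsAcyclic) (h : ¬HasCliqueSuspension Γ k) :
    CentralizersVirtuallyCommute (RAAG Γ) k := by
  induction k generalizing V with
  | zero =>
    refine centralizersVirtuallyCommute_of_eq_top ?_ 0
    by_contra hne
    obtain ⟨u, v, huv⟩ := ne_bot_iff_exists_adj.1 (compl_eq_bot.not.2 hne)
    exact h ⟨∅, u, v, by simp, huv.1, huv.2, by simp⟩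
  | succ k ih =>
    by_cases eq_top : Γ = ⊤
    · exact centralizersVirtuallyCommute_of_eq_top eq_top _
    obtain ⟨w, v, hwv, eq_v⟩ :=
      exists_existsUnique_adj_of_isAcyclic hΓ (compl_eq_bot.not.2 eq_top)
    have universal : (Γ.induce {v}ᶜ).IsUniversal ⟨w, hwv.ne⟩ := fun u hwu => by
      by_contra not_adj
      exact u.2 (eq_v u ⟨Subtype.coe_ne_coe.2 hwu, not_adj⟩)
    have link_cliqueFree : (Γ.induce (Γ.neighborSet v)).CliqueFree (k + 1) :=
      cliqueFree_induce_neighborSet_of_isUniversal hwv.ne (mt Adj.symm hwv.2) universal h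
    have virtuallyCommute := ih (Γ := (Γ.induce {v}ᶜ).induce {⟨w, hwv.ne⟩}ᶜ)
      ((hΓ.embedding (Embedding.complEquiv (Embedding.induce _))).embedding
        (Embedding.complEquiv (Embedding.induce _)))
      fun hs => h ((hasCliqueSuspension_of_induce_compl universal hs).map (Embedding.induce _))
    obtain ⟨φ, hφ⟩ := exists_injective_permutationalExtension Γ v
    exact (PermutationalExtension.centralizersVirtuallyCommute
      (exponentSum_prod_retraction_injective universal)
      (linkSubgroup_le_ker_exponentSum hwv.ne (mt Adj.symm hwv.2)) virtuallyCommute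
      (abelianRankLE_linkSubgroup (abelianRankLE_of_cliqueFree link_cliqueFree))).of_injective hφ

theorem hasCliqueSuspension_of_injective [Finite W] {φ : RAAG Γ →* RAAG Λ}
    (hφ : Function.Injective φ) (hΛ : Λᶜ.IsAcyclic) {k : ℕ} (h : HasCliqueSuspension Γ k) :
    HasCliqueSuspension Λ k := by
  by_contra not_suspension
  obtain ⟨s, u, v, hs, huv, not_adj, adj⟩ := h
  have rank : imageRank (φ.comp (cliqueHom hs.1)) = k := by
    rw [imageRank_comp_of_injective hφ, imageRank_cliqueHom, hs.card_eq]
  have commute_map {x : V} (hx : ∀ y ∈ s, Γ.Adj x y) (y) :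
      Commute (φ (of Γ x)) (φ.comp (cliqueHom hs.1) y) :=
    (commute_cliqueHom hs.1 (fun y hy => commute_of_of_adj (hx y hy)) y).map φ
  obtain ⟨E, hE, commute_pow⟩ :=
    centralizersVirtuallyCommute_of_not_hasCliqueSuspension hΛ not_suspension _ _ _ _ rank.ge
      (commute_map fun x hx => (adj x hx).1) (commute_map fun x hx => (adj x hx).2)
  rw [← map_pow, ← map_pow] at commute_pow
  exact not_commute_pow_of_not_adj huv not_adj hE (Commute.of_map hφ commute_pow)

end RAAG

/-! ### Paths and cycles -/

theorem isAcyclic_hasse {α : Type*} [LinearOrder α] : (hasse α).IsAcyclic := by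
  intro x c hc
  obtain ⟨m, hm, m_max⟩ := c.support.toFinset.exists_max_image id ⟨x, by simp⟩
  have m_mem : m ∈ c.support := List.mem_toFinset.1 hm
  have covBy_of_adj {y : α} (hy : y ∈ c.support) (hmy : (hasse α).Adj m y) : y ⋖ m :=
    hmy.resolve_left fun hlt => (m_max y (List.mem_toFinset.2 hy)).not_gt hlt.lt
  have hrotate := hc.rotate m_mem
  have mem_support {y : α} (hy : y ∈ (c.rotate m m_mem).support) : y ∈ c.support :=
    (c.mem_support_rotate_iff ..).1 hy
  exact hrotate.snd_ne_penultimate <|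
    (covBy_of_adj (mem_support (Walk.getVert_mem_support ..))
      (Walk.adj_snd hrotate.not_nil)).unique_left
    (covBy_of_adj (mem_support (Walk.getVert_mem_support ..))
      (Walk.adj_penultimate hrotate.not_nil).symm)

theorem two_mul_le_of_isNClique_compl_pathGraph {n r : ℕ} {s : Finset (Fin n)}
    (hs : (pathGraph n)ᶜ.IsNClique r s) : 2 * r ≤ n + 1 := by
  have card_le : s.card ≤ (Finset.range ((n + 1) / 2)).card := by
    refine Finset.card_le_card_of_injOn (fun i => (i : ℕ) / 2) (fun i _ => ?_)
      fun i hi j hj hij => ?_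
    · simp only [Finset.coe_range, Set.mem_Iio]
      lia
    · by_contra hne
      have not_adj := (hs.1 hi hj hne).2
      rw [pathGraph_adj] at not_adj
      grind
  rw [hs.card_eq, Finset.card_range] at card_le
  lia

theorem two_mul_add_two_le_of_hasCliqueSuspension_compl_pathGraph {n k : ℕ}
    (h : HasCliqueSuspension (pathGraph n)ᶜ k) : 2 * k + 2 ≤ n := by
  obtain ⟨s, u, v, hs, huv, not_adj, adj⟩ := h
  wlog hlt : u < v generalizing u v
  · exact this v u huv.symm (mt Adj.symm not_adj) (fun x hx => (adj x hx).symm)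
      (huv.lt_or_gt.resolve_left hlt)
  have v_eq : (u : ℕ) + 1 = v := by
    have path_adj := pathGraph_adj.1 (not_not.1 fun h => not_adj ⟨huv, h⟩)
    lia
  have hclique : (pathGraph n)ᶜ.IsNClique (k + 1) (insert u s) :=
    hs.insert fun x hx => (adj x hx).1
  have not_adj_v {x : Fin n} (hx : x ∈ insert u s) (hxu : x ≠ u) :
      (x : ℕ) ≠ v ∧ ¬(pathGraph n).Adj v x := by
    obtain ⟨hvx, not_adj_vx⟩ := (adj x ((Finset.mem_insert.1 hx).resolve_left hxu)).2
    exact ⟨Fin.val_ne_of_ne hvx.symm, not_adj_vx⟩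
  -- Contracting the edge `uv` leaves a path on `n - 1` vertices where `insert u s` is independent.
  have card_le : (insert u s).card ≤ (Finset.range (n / 2)).card := by
    refine Finset.card_le_card_of_injOn (fun i => (if i ≤ u then (i : ℕ) else i - 1) / 2)
      (fun i _ => ?_) fun i hi j hj hij => ?_
    · simp only [Finset.coe_range, Set.mem_Iio]
      split_ifs <;> lia
    · by_contra hne
      have not_adj_ij := (hclique.1 hi hj hne).2
      have hi_v := @not_adj_v i hi
      have hj_v := @not_adj_v j hj
      simp only [pathGraph_adj] at not_adj_ij hi_v hj_v
      grind
  rw [hclique.card_eq, Finset.card_range] at card_le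
  lia

theorem compl_cycleGraph_adj {m : ℕ} {i j : Fin m} (hij : (i : ℕ) + 1 < j)
    (h : (i : ℕ) ≠ 0 ∨ (j : ℕ) + 1 ≠ m) : (cycleGraph m)ᶜ.Adj i j := by
  have hlt : i < j := by lia
  rw [compl_adj, cycleGraph_adj', Fin.coe_sub_iff_lt.2 hlt, Fin.coe_sub_iff_le.2 hlt.le]
  lia

theorem isNClique_map_univ {V : Type*} {G : SimpleGraph V} {d : ℕ} {f : Fin d ↪ V}
    (h : ∀ i j, i < j → G.Adj (f i) (f j)) : G.IsNClique d (Finset.univ.map f) := by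
  refine ⟨?_, by simp⟩
  rw [Finset.coe_map, Finset.coe_univ, Set.image_univ]
  rintro _ ⟨i, rfl⟩ _ ⟨j, rfl⟩ hne
  obtain hij | hij := (ne_of_apply_ne f hne).lt_or_gt
  exacts [h i j hij, (h j i hij).symm]

theorem exists_isNClique_compl_cycleGraph (d : ℕ) :
    ∃ s, (cycleGraph (2 * d))ᶜ.IsNClique d s := by
  let double : Fin d ↪ Fin (2 * d) := ⟨fun i => ⟨2 * i, by lia⟩, fun i j hij => by grind⟩
  have coe_double (i : Fin d) : (double i : ℕ) = 2 * i := rfl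
  refine ⟨_, isNClique_map_univ (f := double) fun i j hij => compl_cycleGraph_adj ?_ ?_⟩ <;>
    rw [coe_double, coe_double] <;> lia

theorem hasCliqueSuspension_compl_cycleGraph (d : ℕ) :
    HasCliqueSuspension (cycleGraph (2 * d + 3))ᶜ d := by
  let odd : Fin d ↪ Fin (2 * d + 3) := ⟨fun i => ⟨2 * i + 3, by lia⟩, fun i j hij => by grind⟩
  have coe_odd (i : Fin d) : (odd i : ℕ) = 2 * i + 3 := rfl
  refine ⟨_, 0, 1, isNClique_map_univ (f := odd) fun i j hij => ?_, by simp, ?_, ?_⟩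
  · apply compl_cycleGraph_adj <;> rw [coe_odd, coe_odd] <;> lia
  · simp [cycleGraph_adj']
  · simp only [Finset.forall_mem_map]
    refine fun i _ => ⟨compl_cycleGraph_adj ?_ ?_, compl_cycleGraph_adj ?_ ?_⟩ <;>
      simp only [coe_odd, Fin.val_zero, Fin.val_one] <;> lia

theorem statement8_general (m n : ℕ)
    (h : ∃ φ : GG (cycleGraph m) →* GG (pathGraph n), Function.Injective φ) : m ≤ n + 1 := by
  obtain ⟨φ, hφ⟩ := h
  obtain ⟨d, rfl | rfl⟩ := m.even_or_odd'
  · obtain ⟨s, hs⟩ := exists_isNClique_compl_cycleGraph d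
    obtain ⟨t, ht⟩ := RAAG.exists_isNClique_of_injective hφ hs
    exact two_mul_le_of_isNClique_compl_pathGraph ht
  · obtain _ | d := d
    · exact Nat.le_add_left ..
    have isAcyclic : (pathGraph n)ᶜᶜ.IsAcyclic := by
      rw [compl_compl]
      exact isAcyclic_hasse
    have two_mul_add_two_le := two_mul_add_two_le_of_hasCliqueSuspension_compl_pathGraph
      (RAAG.hasCliqueSuspension_of_injective hφ isAcyclic (hasCliqueSuspension_compl_cycleGraph d))
    lia

/-- For `m ≥ 5`, if `G(C_m) ↪ G(P_n)` then `m - 1 ≤ n`. -/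
theorem statement8 (m n : ℕ) (hm : 5 ≤ m) (hn : 0 < n)
    (h : ∃ φ : GG (cycleGraph m) →* GG (pathGraph n), Function.Injective φ) :
    m - 1 ≤ n :=
  Nat.sub_le_of_le_add (statement8_general m n h)
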